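/- The ring ℂ[u,v], regarded as a module over ℂ[x,y,z,t] via ψ, is generated by the three elements 1, u, v; equivalently, the ℂ[x,y,z,t]-linear map φ : ℂ[x,y,z,t]³ → ℂ[u,v] given by (a,b,c) ↦ ψ(a)·v + ψ(b)·u + ψ(c) is surjective. -/

import Mathlib

noncomputable section

open MvPolynomial

namespace Reid

abbrev A : Type := MvPolynomial (Fin 4) ℂ
abbrev B : Type := MvPolynomial (Fin 2) ℂ

def u : B := X 0
def v : B := X 1

/-- The ℂ-algebra homomorphism `ψ : ℂ[x,y,z,t] → ℂ[u,v]` with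
`ψ(x) = u²`, `ψ(y) = uv`, `ψ(z) = u³ + v²`, `ψ(t) = u³v + v³`. -/
def ψ : A →ₐ[ℂ] B := aeval ![u ^ 2, u * v, u ^ 3 + v ^ 2, u ^ 3 * v + v ^ 3]

lemma ψ_X_zero : ψ (X 0) = u ^ 2 := by simp [ψ]

lemma ψ_X_one : ψ (X 1) = u * v := by simp [ψ]

lemma ψ_X_two : ψ (X 2) = u ^ 3 + v ^ 2 := by simp [ψ]

/-- `ℂ[u,v]` is generated by `1, u, v` as a module over `ℂ[x,y,z,t]` (acting via `ψ`):
the map `φ : (a,b,c) ↦ ψ(a)·v + ψ(b)·u + ψ(c)` is surjective. -/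
theorem module_generated_by_one_u_v :
    Function.Surjective (fun w : Fin 3 → A => ψ (w 0) * v + ψ (w 1) * u + ψ (w 2)) := by
  intro p
  induction p using MvPolynomial.induction_on with
  | C r => exact ⟨![0, 0, C r], by simp [ψ, ← algebraMap_eq]⟩
  | add p q hp hq =>
    obtain ⟨w, rfl⟩ := hp
    obtain ⟨w', rfl⟩ := hq
    exact ⟨w + w', by simp only [Pi.add_apply, map_add]; ring⟩
  | mul_X p i hp =>
    obtain ⟨w, rfl⟩ := hp
    fin_cases i
    · refine ⟨![0, w 2, w 0 * X 1 + w 1 * X 0], ?_⟩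
      change _ = (ψ (w 0) * v + ψ (w 1) * u + ψ (w 2)) * u
      simp [ψ_X_zero, ψ_X_one]
      ring
    -- `v ^ 2 = ψ(z) - ψ(x) * u`
    · refine ⟨![w 2, -(w 0 * X 0), w 0 * X 2 + w 1 * X 1], ?_⟩
      change _ = (ψ (w 0) * v + ψ (w 1) * u + ψ (w 2)) * v
      simp [ψ_X_zero, ψ_X_one, ψ_X_two]
      ring

end Reid
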